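/- arXiv:2504.03211 — 2 statements merged into one kernel-verified Lean document; each statement's English description precedes it below -/
import Mathlib

section
/- For any ε ≥ 0, t ≥ 1, and indirect utilities U_1,…,U_n : [0,1] → [0,∞), the supremum of V(f) over all finitely supported (ε,ℓ_t)-calibrated predictors f equals OPT(LP-TwoStep+), the optimal value of the program LP-TwoStep+; moreover every feasible bi-event post-processing plan χ generates a finitely supported (ε,ℓ_t)-calibrated predictor f with V(f) equal to the objective value of χ in LP-TwoStep+. -/
open Finset

noncomputable section

namespace PersuasiveCalibration

/-- The environment of the persuasive calibration problem: `n` events with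
probabilities `lam i > 0` summing to one and sorted expected outcomes `theta i ∈ [0,1]`. -/
structure Setup (n : ℕ) : Type where
  lam : Fin n → ℝ
  theta : Fin n → ℝ
  lam_pos : ∀ i, 0 < lam i
  lam_sum : ∑ i, lam i = 1
  theta_mono : Monotone theta
  theta_mem : ∀ i, theta i ∈ Set.Icc (0 : ℝ) 1

variable {n : ℕ}

/-- A finitely supported probability distribution on `[0,1]`. -/
def IsDist (μ : ℝ →₀ ℝ) : Prop :=
  (∀ p, 0 ≤ μ p) ∧ (∀ p ∈ μ.support, p ∈ Set.Icc (0 : ℝ) 1) ∧ (∑ p ∈ μ.support, μ p) = 1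

/-- A predictor assigns to each event a finitely supported probability distribution on `[0,1]`. -/
def IsPredictor (f : Fin n → ℝ →₀ ℝ) : Prop := ∀ i, IsDist (f i)

/-- The (unconditional) prediction space of a predictor. -/
def suppF (f : Fin n → ℝ →₀ ℝ) : Finset ℝ := Finset.univ.biUnion fun i => (f i).support

/-- The marginalized predictor `f(p) = ∑ i, λ i * f i p`. -/
def marginal (S : Setup n) (f : Fin n → ℝ →₀ ℝ) (p : ℝ) : ℝ := ∑ i, S.lam i * f i p

/-- The true expected outcome conditional on the prediction `p`. -/
def kappa (S : Setup n) (f : Fin n → ℝ →₀ ℝ) (p : ℝ) : ℝ :=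
  (∑ i, S.lam i * f i p * S.theta i) / marginal S f p

/-- The `ℓ_t`-norm expected calibration error of a predictor. -/
def ECE (S : Setup n) (t : ℝ) (f : Fin n → ℝ →₀ ℝ) : ℝ :=
  (∑ p ∈ suppF f, marginal S f p * |kappa S f p - p| ^ t) ^ (1 / t)

/-- The principal's expected payoff from predictor `f` with indirect utilities `U i`. -/
def payoff (S : Setup n) (U : Fin n → ℝ → ℝ) (f : Fin n → ℝ →₀ ℝ) : ℝ :=
  ∑ i, S.lam i * ∑ p ∈ (f i).support, f i p * U i p

/-- The principal's payoff in the event-independent setting. -/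
def payoffEI (S : Setup n) (U : ℝ → ℝ) (f : Fin n → ℝ →₀ ℝ) : ℝ :=
  payoff S (fun _ => U) f

/-- A predictor is perfectly calibrated if `κ(q) = q` on its support. -/
def PerfectlyCalibrated (S : Setup n) (g : Fin n → ℝ →₀ ℝ) : Prop :=
  ∀ q ∈ suppF g, kappa S g q = q

/-- An event-independent post-processing plan: a finitely supported probability
distribution on `[0,1] × [0,1]`; the first coordinate is `q`, the second is `p`. -/
def IsPlan (χ : ℝ × ℝ →₀ ℝ) : Prop :=
  (∀ x, 0 ≤ χ x) ∧ (∀ x ∈ χ.support, x.1 ∈ Set.Icc (0 : ℝ) 1 ∧ x.2 ∈ Set.Icc (0 : ℝ) 1) ∧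
    (∑ x ∈ χ.support, χ x) = 1

/-- The `ℓ_t` calibration cost `∑ χ(q,p) |q - p|^t` of a plan. -/
def planCost (t : ℝ) (χ : ℝ × ℝ →₀ ℝ) : ℝ := ∑ x ∈ χ.support, χ x * |x.1 - x.2| ^ t

/-- The `q`-marginal `∑_p χ(q, p)` of a plan. -/
def planMargQ (χ : ℝ × ℝ →₀ ℝ) (q : ℝ) : ℝ :=
  ∑ x ∈ χ.support.filter fun x => x.1 = q, χ x

/-- Feasibility of a post-processing plan for a perfectly calibrated predictor `g` and
an `ℓ_t` ECE budget `ε`. -/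
def FeasiblePlan (S : Setup n) (t ε : ℝ) (g : Fin n → ℝ →₀ ℝ) (χ : ℝ × ℝ →₀ ℝ) : Prop :=
  planCost t χ ≤ ε ^ t ∧ ∀ q, planMargQ χ q = marginal S g q

/-- The value `f_i(p) = ∑_q (g̃_i(q)/g(q)) χ(q,p)` of the predictor generated by `(g̃, χ)`. -/
def genVal (S : Setup n) (g : Fin n → ℝ →₀ ℝ) (χ : ℝ × ℝ →₀ ℝ) (i : Fin n) (p : ℝ) : ℝ :=
  ∑ q ∈ suppF g, g i q / marginal S g q * χ (q, p)

/-- A predictor generated by some perfectly calibrated predictor and some feasible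
event-independent post-processing plan. -/
def IsGenerated (S : Setup n) (t ε : ℝ) (f : Fin n → ℝ →₀ ℝ) : Prop :=
  ∃ (g : Fin n → ℝ →₀ ℝ) (χ : ℝ × ℝ →₀ ℝ),
    IsPredictor g ∧ PerfectlyCalibrated S g ∧ IsPlan χ ∧ FeasiblePlan S t ε g χ ∧
      ∀ i p, f i p = genVal S g χ i p

/-- The CDF of a finitely supported distribution. -/
def cdf (μ : ℝ →₀ ℝ) (x : ℝ) : ℝ := ∑ q ∈ μ.support.filter fun q => q ≤ x, μ q

/-- The CDF of the distribution placing mass `λ_i` at `θ_i`. -/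
def priorCdf (S : Setup n) (x : ℝ) : ℝ :=
  ∑ i ∈ Finset.univ.filter fun i => S.theta i ≤ x, S.lam i

/-- `μ` is a mean-preserving contraction of the distribution putting mass `λ_i` on `θ_i`. -/
def MPCprior (S : Setup n) (μ : ℝ →₀ ℝ) : Prop :=
  (∀ s ∈ Set.Icc (0 : ℝ) 1,
      (∫ x in (0 : ℝ)..s, cdf μ x) ≤ ∫ x in (0 : ℝ)..s, priorCdf S x) ∧
    (∫ x in (0 : ℝ)..(1 : ℝ), cdf μ x) = ∫ x in (0 : ℝ)..(1 : ℝ), priorCdf S x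

/-- The objective `∑ χ(q,p) U(p)` of the program LP-TwoStep. -/
def LPobj (U : ℝ → ℝ) (χ : ℝ × ℝ →₀ ℝ) : ℝ := ∑ x ∈ χ.support, χ x * U x.2

/-- Feasibility for the program LP-TwoStep. -/
def LPFeasible (S : Setup n) (ε t : ℝ) (χ : ℝ × ℝ →₀ ℝ) (g : ℝ →₀ ℝ) : Prop :=
  (∀ x, 0 ≤ χ x) ∧
  (∀ x ∈ χ.support, x.1 ∈ Set.Icc (0 : ℝ) 1 ∧ x.2 ∈ Set.Icc (0 : ℝ) 1) ∧
  planCost t χ ≤ ε ^ t ∧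
  (∀ q, planMargQ χ q = g q) ∧ IsDist g ∧ MPCprior S g

/-- The optimal value of LP-TwoStep. -/
def OPTLP (S : Setup n) (ε t : ℝ) (U : ℝ → ℝ) : ℝ :=
  sSup {v | ∃ (χ : ℝ × ℝ →₀ ℝ) (g : ℝ →₀ ℝ), LPFeasible S ε t χ g ∧ v = LPobj U χ}

/-- Symmetric linear-tailed convex function with linear tails `[0, xL]`, `[xH, 1]` and
tail slopes `s1`, `s2` of equal absolute value. -/
def SymLinTailedConvex (Γ : ℝ → ℝ) (xL xH s1 s2 : ℝ) : Prop :=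
  ConvexOn ℝ (Set.Icc (0 : ℝ) 1) Γ ∧ 0 ≤ xL ∧ xL ≤ xH ∧ xH ≤ 1 ∧ |s1| = |s2| ∧
    (∃ c1, ∀ x ∈ Set.Icc (0 : ℝ) xL, Γ x = c1 + s1 * x) ∧
    (∃ c2, ∀ x ∈ Set.Icc xH (1 : ℝ), Γ x = c2 + s2 * x)

/-- Tuples `(i, j, q, p)` indexing a bi-event post-processing plan. -/
abbrev BiTuple (n : ℕ) := Fin n × Fin n × ℝ × ℝ

/-- The contribution ratio `r_{i,j}(q)`. -/
def ratio (S : Setup n) (i j : Fin n) (q : ℝ) : ℝ :=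
  if S.theta i < S.theta j then (S.theta j - q) / (S.theta j - S.theta i) else 1

/-- The contribution of the tuple `x = (i', j', q, p)` to event `i`:
`r_{i,j'}(q)` if `i' = i`, and `1 - r_{i',i}(q)` if `j' = i ≠ i'`. -/
def contrib (S : Setup n) (x : BiTuple n) (i : Fin n) : ℝ :=
  (if x.1 = i then ratio S x.1 x.2.1 x.2.2.1 else 0) +
    (if x.2.1 = i ∧ x.1 ≠ i then 1 - ratio S x.1 x.2.1 x.2.2.1 else 0)

/-- A bi-event post-processing plan. -/
def IsBiPlan (S : Setup n) (χ : BiTuple n →₀ ℝ) : Prop :=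
  (∀ x, 0 ≤ χ x) ∧
    ∀ x ∈ χ.support, x.1 ≤ x.2.1 ∧ x.2.2.1 ∈ Set.Icc (0 : ℝ) 1 ∧
      x.2.2.2 ∈ Set.Icc (0 : ℝ) 1 ∧ S.theta x.1 ≤ x.2.2.1 ∧ x.2.2.1 ≤ S.theta x.2.1

/-- Feasibility of a bi-event post-processing plan for `ℓ_t` ECE budget `ε`. -/
def FeasibleBiPlan (S : Setup n) (t ε : ℝ) (χ : BiTuple n →₀ ℝ) : Prop :=
  IsBiPlan S χ ∧
    (∑ x ∈ χ.support, χ x * |x.2.2.1 - x.2.2.2| ^ t) ≤ ε ^ t ∧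
    ∀ i, (∑ x ∈ χ.support, χ x * contrib S x i) = S.lam i

/-- The value `f_i(p)` of the predictor generated by a bi-event post-processing plan. -/
def genValBi (S : Setup n) (χ : BiTuple n →₀ ℝ) (i : Fin n) (p : ℝ) : ℝ :=
  1 / S.lam i * ∑ x ∈ χ.support.filter fun x => x.2.2.2 = p, χ x * contrib S x i

/-- The objective of LP-TwoStep+: `∑ χ_{i,j}(q,p) U_{i,j}(q,p)`. -/
def biObj (S : Setup n) (U : Fin n → ℝ → ℝ) (χ : BiTuple n →₀ ℝ) : ℝ :=
  ∑ x ∈ χ.support, χ x * (ratio S x.1 x.2.1 x.2.2.1 * U x.1 x.2.2.2 +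
    (1 - ratio S x.1 x.2.1 x.2.2.1) * U x.2.1 x.2.2.2)

/-- The optimal value of LP-TwoStep+. -/
def OPTBi (S : Setup n) (U : Fin n → ℝ → ℝ) (t ε : ℝ) : ℝ :=
  sSup {v | ∃ χ : BiTuple n →₀ ℝ, FeasibleBiPlan S t ε χ ∧ v = biObj S U χ}

/-- `U` is piecewise constant with all its discontinuity points in `Z`. -/
def PiecewiseConstWrt (Z : Finset ℝ) (U : ℝ → ℝ) : Prop :=
  ∀ x ∈ Set.Icc (0 : ℝ) 1, ∀ y ∈ Set.Icc (0 : ℝ) 1,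
    (∀ z ∈ Z, z ∉ Set.uIcc x y) → U x = U y

/-- The bound `S = ⌈2 ln(1/δ) / ln(1+δ)⌉` of the second discretization layer. -/
def Sbound (δ : ℝ) : ℕ := ⌈2 * Real.log (1 / δ) / Real.log (1 + δ)⌉₊

/-- The instance-dependent two-layer discretized set `S_δ`. -/
def gridSet (S : Setup n) (Z : Finset ℝ) (ε t δ : ℝ) : Set ℝ :=
  ({x : ℝ | ∃ k : ℕ, x = (k : ℝ) * δ} ∪ {(1 : ℝ)} ∪ Set.range S.theta ∪ (↑Z : Set ℝ) ∪
      {x : ℝ | ∃ z ∈ (↑Z : Set ℝ) ∪ Set.range S.theta, ∃ s : ℕ, s ≤ Sbound δ ∧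
        (x = z + (ε ^ t * δ * (1 + δ) ^ s) ^ (1 / t) ∨
          x = z - (ε ^ t * δ * (1 + δ) ^ s) ^ (1 / t))}) ∩
    Set.Icc (0 : ℝ) 1

/-- Feasibility for the discretized program LP-DiscTwoStep+. -/
def DiscFeasibleBiPlan (S : Setup n) (Z : Finset ℝ) (t ε δ : ℝ) (χ : BiTuple n →₀ ℝ) : Prop :=
  FeasibleBiPlan S t ε χ ∧
    ∀ x ∈ χ.support, x.2.2.1 ∈ gridSet S Z ε t δ ∧ x.2.2.2 ∈ gridSet S Z ε t δ

/-- The optimal value of LP-DiscTwoStep+. -/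
def OPTBiDisc (S : Setup n) (U : Fin n → ℝ → ℝ) (Z : Finset ℝ) (t ε δ : ℝ) : ℝ :=
  sSup {v | ∃ χ : BiTuple n →₀ ℝ, DiscFeasibleBiPlan S Z t ε δ χ ∧ v = biObj S U χ}

/-- A Bayesian persuasion instance with signal-dependent bias: states `θ_i` with
prior `λ`, actions `A`, sender utility `u a i = u(a, θ_i) ≥ 0`, and receiver utility
determined by `v1 a = v(a,1)` and `v0 a = v(a,0)`. -/
structure PSetup (n : ℕ) (A : Type*) : Type _ where
  lam : Fin n → ℝ
  theta : Fin n → ℝ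
  u : A → Fin n → ℝ
  v1 : A → ℝ
  v0 : A → ℝ
  lam_pos : ∀ i, 0 < lam i
  lam_sum : ∑ i, lam i = 1
  theta_mem : ∀ i, theta i ∈ Set.Icc (0 : ℝ) 1
  u_nonneg : ∀ a i, 0 ≤ u a i

variable {A σT : Type*}

/-- The receiver's utility from action `a` at belief mean `x`. -/
def rcvU (P : PSetup n A) (a : A) (x : ℝ) : ℝ := x * P.v1 a + (1 - x) * P.v0 a

/-- The total probability `m(σ)` of a signal `σ`. -/
def mass [Fintype σT] (P : PSetup n A) (π : Fin n → σT → ℝ) (σ : σT) : ℝ :=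
  ∑ i, P.lam i * π i σ

/-- The biased posterior mean `p(σ)` of the receiver upon signal `σ`. -/
def belief [Fintype σT] (P : PSetup n A) (π : Fin n → σT → ℝ) (b : σT → ℝ) (σ : σT) : ℝ :=
  (b σ + ∑ i, P.lam i * π i σ * P.theta i) / mass P π σ

/-- Validity of a sender strategy `(π, b)`. -/
def ValidStrategy [Fintype σT] (P : PSetup n A) (π : Fin n → σT → ℝ) (b : σT → ℝ) : Prop :=
  (∀ i σ, 0 ≤ π i σ) ∧ (∀ i, ∑ σ, π i σ = 1) ∧
    ∀ σ, 0 < mass P π σ → belief P π b σ ∈ Set.Icc (0 : ℝ) 1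

/-- `astar` is a receiver best-response selection for the strategy `(π, b)`. -/
def BestResponse [Fintype σT] (P : PSetup n A) (π : Fin n → σT → ℝ) (b : σT → ℝ)
    (astar : σT → A) : Prop :=
  ∀ σ, 0 < mass P π σ → ∀ a, rcvU P a (belief P π b σ) ≤ rcvU P (astar σ) (belief P π b σ)

/-- The bounded-rationality constraint on the total bias. -/
def BRconstraint [Fintype σT] (P : PSetup n A) (t ε : ℝ) (π : Fin n → σT → ℝ)
    (b : σT → ℝ) : Prop :=
  (∑ σ, mass P π σ * |b σ / mass P π σ| ^ t) ^ (1 / t) ≤ ε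

/-- The sender's expected payoff from strategy `π` with receiver selection `astar`. -/
def senderPayoff [Fintype σT] (P : PSetup n A) (π : Fin n → σT → ℝ) (astar : σT → A) : ℝ :=
  ∑ i, P.lam i * ∑ σ, π i σ * P.u (astar σ) i

/-- Feasibility for the action-recommendation program P-ActRec. -/
def PActRecFeasible [Fintype A] (P : PSetup n A) (t ε : ℝ)
    (π : Fin n → A → ℝ) (b : A → ℝ) : Prop :=
  (∀ i a, 0 ≤ π i a) ∧ (∀ i, ∑ a, π i a = 1) ∧
  (∀ a, mass P π a = 0 → b a = 0) ∧
  (∑ a, mass P π a * |b a / mass P π a| ^ t) ≤ ε ^ t ∧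
  (∀ a, 0 ≤ b a + ∑ i, P.lam i * π i a * P.theta i) ∧
  (∀ a, b a + ∑ i, P.lam i * π i a * P.theta i ≤ mass P π a) ∧
  ∀ a a' : A,
    (b a + ∑ i, P.lam i * π i a * P.theta i) * P.v1 a' +
        (mass P π a - (b a + ∑ i, P.lam i * π i a * P.theta i)) * P.v0 a' ≤
      (b a + ∑ i, P.lam i * π i a * P.theta i) * P.v1 a +
        (mass P π a - (b a + ∑ i, P.lam i * π i a * P.theta i)) * P.v0 a

/-- The sender-side marginal probability of recommendation `a` (calibration model). -/
def pmass [Fintype A] (S : Setup n) (π : Fin n → A → ℝ) (a : A) : ℝ := ∑ i, S.lam i * π i a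

/-- The biased posterior mean associated with recommendation `a` (calibration model). -/
def pbelief [Fintype A] (S : Setup n) (π : Fin n → A → ℝ) (b : A → ℝ) (a : A) : ℝ :=
  (b a + ∑ i, S.lam i * π i a * S.theta i) / pmass S π a

/-!
Write `E_{i,j,q}[a] = r_{i,j}(q) a_i + (1 - r_{i,j}(q)) a_j`; this mean reproduces constants and has
`E_{i,j,q}[θ] = q`. A plan and a predictor carry the same information when, for every `p` and every
`a`, `∑_i λ_i f_i(p) a_i` is the `χ(·, p)`-average of `E_{i,j,q}[a]`: taking `a` to be `1`, `θ`, an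
indicator of one event or `U_·(p)` gives the mass, the true outcome, the event marginals and the
payoff respectively.

From a plan to a predictor, `κ(p)` is the `χ(·, p)`-average of `q`, so by convexity of `|· - p|^t`
the calibration error can only drop. From a predictor to a plan, for each `p` the masses
`λ_i f_i(p)` with barycenter `κ(p)` are split into pairs of events straddling `κ(p)` with
barycenter exactly `κ(p)`, which keeps the calibration error unchanged.
-/

section Convexity

variable {ι E : Type*} {s : Finset ι} {w : ι → ℝ}

lemma sum_mul_sub_centerMass_eq_zero (hw : ∀ i ∈ s, 0 ≤ w i) (z : ι → ℝ) :
    ∑ i ∈ s, w i * (z i - s.centerMass w z) = 0 := by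
  rcases eq_or_ne (∑ i ∈ s, w i) 0 with hzero | hne
  · rw [sum_eq_zero_iff_of_nonneg hw] at hzero
    exact sum_eq_zero fun i hi => by rw [hzero i hi, zero_mul]
  · simp only [mul_sub, sum_sub_distrib, ← sum_mul, centerMass, smul_eq_mul]
    rw [mul_inv_cancel_left₀ hne, sub_self]

lemma sum_mul_map_centerMass_le [AddCommGroup E] [Module ℝ E] {C : Set E} {φ : E → ℝ} {z : ι → E}
    (hφ : ConvexOn ℝ C φ) (hw : ∀ i ∈ s, 0 ≤ w i) (hz : ∀ i ∈ s, z i ∈ C) :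
    (∑ i ∈ s, w i) * φ (s.centerMass w z) ≤ ∑ i ∈ s, w i * φ (z i) := by
  rcases (sum_nonneg hw).eq_or_lt with hzero | hpos
  · have hw_zero := (sum_eq_zero_iff_of_nonneg hw).1 hzero.symm
    rw [← hzero, zero_mul, sum_eq_zero fun i hi => by rw [hw_zero i hi, zero_mul]]
  · calc (∑ i ∈ s, w i) * φ (s.centerMass w z)
        ≤ (∑ i ∈ s, w i) * s.centerMass w (φ ∘ z) := by
          gcongr
          exact hφ.map_centerMass_le hw hpos hz
      _ = ∑ i ∈ s, w i * φ (z i) := by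
          simp only [centerMass, smul_eq_mul, Function.comp_apply]
          exact mul_inv_cancel_left₀ hpos.ne' _

lemma convexOn_norm_sub_rpow [NormedAddCommGroup E] [NormedSpace ℝ E] {t : ℝ} (ht : 1 ≤ t)
    (p : E) : ConvexOn ℝ Set.univ fun x : E => ‖x - p‖ ^ t := by
  have hdist : ConvexOn ℝ Set.univ fun x : E => dist x p := convexOn_dist p convex_univ
  have himage : (fun x : E => dist x p) '' Set.univ ⊆ Set.Ici 0 := by
    rintro _ ⟨x, -, rfl⟩
    exact dist_nonneg
  have himage_convex : Convex ℝ ((fun x : E => dist x p) '' Set.univ) :=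
    (isPreconnected_univ.image _ (by fun_prop)).ordConnected.convex
  simpa only [Function.comp_def, dist_eq_norm] using
    ((convexOn_rpow ht).subset himage himage_convex).comp hdist
      ((Real.monotoneOn_rpow_Ici_of_exponent_nonneg (by positivity)).mono himage)

end Convexity

section Pairing

variable {ι : Type*} [Fintype ι] {m θ : ι → ℝ} {κ : ℝ}

/-- The first moment about `κ` of the part of the masses `m` at the points `θ` lying above `κ`;
when `κ` is the barycenter, the part below `κ` has the opposite moment. -/
def excess (m θ : ι → ℝ) (κ : ℝ) : ℝ := ∑ j with κ < θ j, m j * (θ j - κ)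

lemma sum_filter_le_mul_sub_eq_excess (hκ : ∑ i, m i * (θ i - κ) = 0) :
    ∑ i with θ i ≤ κ, m i * (κ - θ i) = excess m θ κ := by
  have hsplit := sum_filter_add_sum_filter_not univ (fun i => κ < θ i) fun i => m i * (θ i - κ)
  simp only [not_lt, hκ] at hsplit
  rw [excess, eq_neg_of_add_eq_zero_left hsplit, ← sum_neg_distrib]
  exact sum_congr rfl fun i _ => by ring

lemma excess_nonneg (hm : ∀ i, 0 ≤ m i) : 0 ≤ excess m θ κ :=
  sum_nonneg fun j hj => mul_nonneg (hm j) (sub_nonneg.2 (mem_filter.1 hj).2.le)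

lemma eq_of_excess_eq_zero (hm : ∀ i, 0 ≤ m i) (hκ : ∑ i, m i * (θ i - κ) = 0)
    (hD : excess m θ κ = 0) {i : ι} (hi : m i ≠ 0) : θ i = κ := by
  rcases le_or_gt (θ i) κ with hle | hlt
  · have hbelow := sum_filter_le_mul_sub_eq_excess hκ
    rw [hD, sum_eq_zero_iff_of_nonneg fun j hj =>
      mul_nonneg (hm j) (sub_nonneg.2 (mem_filter.1 hj).2)] at hbelow
    have := (mul_eq_zero.1 (hbelow i (by simpa using hle))).resolve_left hi
    linarith
  · rw [excess, sum_eq_zero_iff_of_nonneg fun j hj =>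
      mul_nonneg (hm j) (sub_nonneg.2 (mem_filter.1 hj).2.le)] at hD
    have := (mul_eq_zero.1 (hD i (by simpa using hlt))).resolve_left hi
    linarith

lemma sum_sum_straddling_eq (hκ : ∑ i, m i * (θ i - κ) = 0) (hD : excess m θ κ ≠ 0) (a : ι → ℝ) :
    ∑ i with θ i ≤ κ, ∑ j with κ < θ j,
      m i * m j / excess m θ κ * ((θ j - κ) * a i + (κ - θ i) * a j) = ∑ i, m i * a i := by
  set D := excess m θ κ with hD_def
  calc _ = ((∑ i with θ i ≤ κ, m i * a i) * (∑ j with κ < θ j, m j * (θ j - κ)) +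
          (∑ i with θ i ≤ κ, m i * (κ - θ i)) * ∑ j with κ < θ j, m j * a j) / D := by
        simp only [sum_mul_sum, ← sum_add_distrib, sum_div]
        exact sum_congr rfl fun i _ => sum_congr rfl fun j _ => by ring
    _ = (∑ j with κ < θ j, m j * a j) + ∑ i with θ i ≤ κ, m i * a i := by
        rw [sum_filter_le_mul_sub_eq_excess hκ, ← excess, ← hD_def]
        field_simp
        ring
    _ = ∑ i, m i * a i := by
        simpa only [not_lt] using
          sum_filter_add_sum_filter_not univ (fun i => κ < θ i) fun i => m i * a i

variable [DecidableEq ι]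

/-- The mass given to the pair `(i, j)` when masses `m` at points `θ` with barycenter `κ` are split
into pairs with barycenter `κ`: each mass on one side of `κ` is matched with the masses on the
other side in proportion to their moments about `κ`. If `excess m θ κ = 0`, all the mass sits at
`κ` and each point is paired with itself. -/
def pairWeight (m θ : ι → ℝ) (κ : ℝ) (i j : ι) : ℝ :=
  if excess m θ κ = 0 then if i = j then m i else 0
  else if θ i ≤ κ ∧ κ < θ j then m i * m j / excess m θ κ * (θ j - θ i) else 0

lemma pairWeight_nonneg (hm : ∀ i, 0 ≤ m i) (i j : ι) : 0 ≤ pairWeight m θ κ i j := by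
  unfold pairWeight
  split_ifs with hD hij hstraddle
  · exact hm i
  · exact le_rfl
  · exact mul_nonneg (div_nonneg (mul_nonneg (hm i) (hm j)) (excess_nonneg hm))
      (sub_nonneg.2 (hstraddle.1.trans hstraddle.2.le))
  · exact le_rfl

lemma eq_or_lt_of_pairWeight_ne_zero (hm : ∀ i, 0 ≤ m i) (hκ : ∑ i, m i * (θ i - κ) = 0) {i j : ι}
    (hw : pairWeight m θ κ i j ≠ 0) : (i = j ∧ θ i = κ) ∨ (θ i ≤ κ ∧ κ < θ j) := by
  unfold pairWeight at hw
  split_ifs at hw with hD hij hstraddle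
  · exact Or.inl ⟨hij, eq_of_excess_eq_zero hm hκ hD hw⟩
  · exact absurd rfl hw
  · exact Or.inr hstraddle
  · exact absurd rfl hw

end Pairing

section PairMean

variable {S : Setup n} {i j : Fin n} {q : ℝ}

lemma ratio_mem_Icc (hi : S.theta i ≤ q) (hj : q ≤ S.theta j) :
    ratio S i j q ∈ Set.Icc (0 : ℝ) 1 := by
  unfold ratio
  split_ifs with hlt
  · have hpos : 0 < S.theta j - S.theta i := sub_pos.2 hlt
    exact ⟨div_nonneg (by linarith) hpos.le, (div_le_one hpos).2 (by linarith)⟩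
  · exact ⟨zero_le_one, le_rfl⟩

lemma ratio_self (S : Setup n) (i : Fin n) (q : ℝ) : ratio S i i q = 1 := if_neg (lt_irrefl _)

/-- The mean of `a` over the two events of the tuple `x = (i, j, q, p)`, weighted by the
contribution ratio `r_{i,j}(q)`. For `a = U_·(p)` it is the utility `U_{i,j}(q,p)`. -/
def pairMean (S : Setup n) (x : BiTuple n) (a : Fin n → ℝ) : ℝ :=
  ratio S x.1 x.2.1 x.2.2.1 * a x.1 + (1 - ratio S x.1 x.2.1 x.2.2.1) * a x.2.1

lemma pairMean_const (S : Setup n) (x : BiTuple n) (c : ℝ) : pairMean S x (fun _ => c) = c := by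
  unfold pairMean
  ring

lemma pairMean_theta {x : BiTuple n} (hi : S.theta x.1 ≤ x.2.2.1) (hj : x.2.2.1 ≤ S.theta x.2.1) :
    pairMean S x S.theta = x.2.2.1 := by
  unfold pairMean ratio
  split_ifs with hlt
  · have hne : S.theta x.2.1 - S.theta x.1 ≠ 0 := (sub_pos.2 hlt).ne'
    field_simp
    ring
  · linarith

lemma pairMean_nonneg {x : BiTuple n} (hi : S.theta x.1 ≤ x.2.2.1) (hj : x.2.2.1 ≤ S.theta x.2.1)
    {a : Fin n → ℝ} (ha : ∀ k, 0 ≤ a k) : 0 ≤ pairMean S x a :=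
  have hratio := ratio_mem_Icc hi hj
  add_nonneg (mul_nonneg hratio.1 (ha _)) (mul_nonneg (sub_nonneg.2 hratio.2) (ha _))

lemma pairMean_eq_sum (S : Setup n) (x : BiTuple n) (a : Fin n → ℝ) :
    pairMean S x a = ∑ k, pairMean S x (Pi.single k 1) * a k := by
  simp only [pairMean, add_mul, sum_add_distrib, mul_assoc, ← mul_sum, Pi.single_apply, ite_mul,
    one_mul, zero_mul, sum_ite_eq, mem_univ, if_true]

lemma contrib_eq_pairMean (S : Setup n) (x : BiTuple n) (k : Fin n) :
    contrib S x k = pairMean S x (Pi.single k 1) := by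
  obtain ⟨i, j, q, p⟩ := x
  rcases eq_or_ne i j with rfl | hij
  · simp [contrib, pairMean, ratio_self, Pi.single_apply]
  · by_cases hik : i = k <;> simp_all [contrib, pairMean, Pi.single_apply]

lemma biObj_eq_sum_pairMean (S : Setup n) (U : Fin n → ℝ → ℝ) (χ : BiTuple n →₀ ℝ) :
    biObj S U χ = ∑ x ∈ χ.support, χ x * pairMean S x (fun k => U k x.2.2.2) := rfl

lemma sum_pairWeight_mul_pairMean {m : Fin n → ℝ} {κ : ℝ}
    (hκ : ∑ i, m i * (S.theta i - κ) = 0) (p : ℝ) (a : Fin n → ℝ) :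
    ∑ i, ∑ j, pairWeight m S.theta κ i j * pairMean S (i, j, κ, p) a = ∑ i, m i * a i := by
  by_cases hD : excess m S.theta κ = 0
  · simp [pairWeight, hD, pairMean, ratio_self]
  · rw [← sum_sum_straddling_eq hκ hD a, sum_filter]
    refine sum_congr rfl fun i _ => ?_
    split_ifs with hi
    · rw [sum_filter]
      refine sum_congr rfl fun j _ => ?_
      split_ifs with hj
      · have hlt : S.theta i < S.theta j := hi.trans_lt hj
        have hne : S.theta j - S.theta i ≠ 0 := (sub_pos.2 hlt).ne'
        simp only [pairWeight, pairMean, ratio, hD, hi, hj, hlt, and_self, if_true, if_false]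
        field_simp
        ring
      · simp [pairWeight, hD, hj]
    · simp [pairWeight, hD, hi]

end PairMean

section Predictor

variable {S : Setup n} {f : Fin n → ℝ →₀ ℝ} {t ε : ℝ}

lemma support_subset_suppF (f : Fin n → ℝ →₀ ℝ) (i : Fin n) : (f i).support ⊆ suppF f :=
  subset_biUnion_of_mem (fun i => (f i).support) (mem_univ i)

lemma sum_support_mul_eq_sum_suppF (f : Fin n → ℝ →₀ ℝ) (i : Fin n) (G : ℝ → ℝ) :
    ∑ p ∈ (f i).support, f i p * G p = ∑ p ∈ suppF f, f i p * G p :=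
  sum_subset (support_subset_suppF f i) fun p _ hp => by
    rw [Finsupp.notMem_support_iff.1 hp, zero_mul]

lemma IsPredictor.sum_suppF_eq_one (hf : IsPredictor f) (i : Fin n) :
    ∑ p ∈ suppF f, f i p = 1 := by
  simpa only [mul_one, (hf i).2.2] using (sum_support_mul_eq_sum_suppF f i fun _ => 1).symm

lemma payoff_eq_sum_suppF (S : Setup n) (U : Fin n → ℝ → ℝ) (f : Fin n → ℝ →₀ ℝ) :
    payoff S U f = ∑ p ∈ suppF f, ∑ i, S.lam i * f i p * U i p := by
  simp only [payoff, sum_support_mul_eq_sum_suppF, mul_sum, mul_assoc]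
  exact sum_comm

lemma IsPredictor.mem_Icc_of_mem_suppF (hf : IsPredictor f) {p : ℝ} (hp : p ∈ suppF f) :
    p ∈ Set.Icc (0 : ℝ) 1 := by
  obtain ⟨i, -, hi⟩ := mem_biUnion.1 hp
  exact (hf i).2.1 p hi

lemma IsPredictor.lam_mul_nonneg (hf : IsPredictor f) (p : ℝ) (i : Fin n) : 0 ≤ S.lam i * f i p :=
  mul_nonneg (S.lam_pos i).le ((hf i).1 p)

lemma kappa_eq_centerMass (S : Setup n) (f : Fin n → ℝ →₀ ℝ) (p : ℝ) :
    kappa S f p = univ.centerMass (fun i => S.lam i * f i p) S.theta :=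
  div_eq_inv_mul _ _

lemma IsPredictor.sum_lam_mul_theta_sub_kappa (hf : IsPredictor f) (p : ℝ) :
    ∑ i, S.lam i * f i p * (S.theta i - kappa S f p) = 0 := by
  rw [kappa_eq_centerMass]
  exact sum_mul_sub_centerMass_eq_zero (fun i _ => hf.lam_mul_nonneg p i) S.theta

lemma IsPredictor.ECE_le_iff (hf : IsPredictor f) (ht : 0 < t) (hε : 0 ≤ ε) :
    ECE S t f ≤ ε ↔ ∑ p ∈ suppF f, marginal S f p * |kappa S f p - p| ^ t ≤ ε ^ t := by
  have hcost_nonneg : 0 ≤ ∑ p ∈ suppF f, marginal S f p * |kappa S f p - p| ^ t :=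
    sum_nonneg fun p _ =>
      mul_nonneg (sum_nonneg fun i _ => hf.lam_mul_nonneg p i) (by positivity)
  rw [ECE, one_div, Real.rpow_inv_le_iff_of_pos hcost_nonneg hε ht]

end Predictor

section GeneratedPredictor

variable {S : Setup n} {χ : BiTuple n →₀ ℝ} {t ε : ℝ}

/-- The predictor generated by a bi-event post-processing plan, as a family of finitely supported
functions; its values are `genValBi`. -/
def generatedPredictor (S : Setup n) (χ : BiTuple n →₀ ℝ) (i : Fin n) : ℝ →₀ ℝ :=
  (1 / S.lam i) • ∑ x ∈ χ.support, Finsupp.single x.2.2.2 (χ x * contrib S x i)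

lemma generatedPredictor_apply (S : Setup n) (χ : BiTuple n →₀ ℝ) (i : Fin n) (p : ℝ) :
    generatedPredictor S χ i p = genValBi S χ i p := by
  simp only [generatedPredictor, genValBi, Finsupp.smul_apply, Finsupp.finsetSum_apply,
    Finsupp.single_apply, smul_eq_mul, sum_filter]

lemma lam_mul_sum_generatedPredictor_mul (S : Setup n) (χ : BiTuple n →₀ ℝ) (i : Fin n)
    (G : ℝ → ℝ) :
    S.lam i * ∑ p ∈ (generatedPredictor S χ i).support, generatedPredictor S χ i p * G p =
      ∑ x ∈ χ.support, χ x * contrib S x i * G x.2.2.2 := by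
  change S.lam i * Finsupp.linearCombination ℝ G (generatedPredictor S χ i) = _
  simp only [generatedPredictor, map_smul, map_sum, Finsupp.linearCombination_single, smul_eq_mul]
  rw [← mul_assoc, mul_one_div_cancel (S.lam_pos i).ne', one_mul]

lemma sum_lam_mul_generatedPredictor_mul (S : Setup n) (χ : BiTuple n →₀ ℝ) (p : ℝ)
    (a : Fin n → ℝ) :
    ∑ i, S.lam i * generatedPredictor S χ i p * a i =
      ∑ x ∈ χ.support with x.2.2.2 = p, χ x * pairMean S x a := by
  simp only [pairMean_eq_sum S _ a, ← contrib_eq_pairMean, mul_sum]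
  rw [sum_comm]
  refine sum_congr rfl fun i _ => ?_
  rw [generatedPredictor_apply, genValBi, ← mul_assoc, mul_one_div_cancel (S.lam_pos i).ne',
    one_mul, sum_mul]
  exact sum_congr rfl fun x _ => mul_assoc _ _ _

lemma marginal_generatedPredictor (S : Setup n) (χ : BiTuple n →₀ ℝ) (p : ℝ) :
    marginal S (generatedPredictor S χ) p = ∑ x ∈ χ.support with x.2.2.2 = p, χ x := by
  simpa only [marginal, pairMean_const, mul_one] using
    sum_lam_mul_generatedPredictor_mul S χ p fun _ => 1

lemma IsBiPlan.kappa_generatedPredictor (hχ : IsBiPlan S χ) (p : ℝ) :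
    kappa S (generatedPredictor S χ) p =
      {x ∈ χ.support | x.2.2.2 = p}.centerMass χ fun x => x.2.2.1 := by
  have houtcome : ∑ i, S.lam i * generatedPredictor S χ i p * S.theta i =
      ∑ x ∈ χ.support with x.2.2.2 = p, χ x * x.2.2.1 := by
    rw [sum_lam_mul_generatedPredictor_mul]
    refine sum_congr rfl fun x hx => ?_
    obtain ⟨-, -, -, hi, hj⟩ := hχ.2 x (mem_filter.1 hx).1
    rw [pairMean_theta hi hj]
  rw [kappa, houtcome, marginal_generatedPredictor]
  exact div_eq_inv_mul _ _

lemma FeasibleBiPlan.isPredictor_generatedPredictor (hχ : FeasibleBiPlan S t ε χ) :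
    IsPredictor (generatedPredictor S χ) := by
  obtain ⟨⟨hnonneg, hsupp⟩, -, hlam⟩ := hχ
  refine fun i => ⟨fun p => ?_, fun p hp => ?_, ?_⟩
  · rw [generatedPredictor_apply, genValBi]
    refine mul_nonneg (one_div_pos.2 (S.lam_pos i)).le (sum_nonneg fun x hx => ?_)
    obtain ⟨-, -, -, hi, hj⟩ := hsupp x (mem_filter.1 hx).1
    have hindicator : (0 : Fin n → ℝ) ≤ Pi.single i 1 := Pi.single_nonneg.2 zero_le_one
    rw [contrib_eq_pairMean]
    exact mul_nonneg (hnonneg x) (pairMean_nonneg hi hj hindicator)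
  · rw [Finsupp.mem_support_iff, generatedPredictor_apply, genValBi] at hp
    obtain ⟨x, hx, -⟩ := exists_ne_zero_of_sum_ne_zero (right_ne_zero_of_mul hp)
    obtain ⟨hx_supp, rfl⟩ := mem_filter.1 hx
    exact (hsupp x hx_supp).2.2.1
  · have hmass := lam_mul_sum_generatedPredictor_mul S χ i fun _ => 1
    simp only [mul_one, hlam i] at hmass
    exact mul_left_cancel₀ (S.lam_pos i).ne' (hmass.trans (mul_one _).symm)

lemma IsBiPlan.sum_marginal_generatedPredictor_le (hχ : IsBiPlan S χ) (ht : 1 ≤ t)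
    (P : Finset ℝ) :
    ∑ p ∈ P, marginal S (generatedPredictor S χ) p *
        |kappa S (generatedPredictor S χ) p - p| ^ t ≤
      ∑ x ∈ χ.support, χ x * |x.2.2.1 - x.2.2.2| ^ t := by
  have hcost_nonneg (x : BiTuple n) : 0 ≤ χ x * |x.2.2.1 - x.2.2.2| ^ t :=
    mul_nonneg (hχ.1 x) (by positivity)
  refine le_trans (sum_le_sum fun p _ => ?_) (sum_fiberwise_le_sum_of_sum_fiber_nonneg
    (g := fun x : BiTuple n => x.2.2.2) fun p _ => sum_nonneg fun x _ => hcost_nonneg x)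
  calc marginal S (generatedPredictor S χ) p * |kappa S (generatedPredictor S χ) p - p| ^ t
      ≤ ∑ x ∈ χ.support with x.2.2.2 = p, χ x * |x.2.2.1 - p| ^ t := by
        rw [marginal_generatedPredictor, hχ.kappa_generatedPredictor]
        exact sum_mul_map_centerMass_le (convexOn_norm_sub_rpow ht p) (fun x _ => hχ.1 x)
          fun x _ => Set.mem_univ _
    _ = ∑ x ∈ χ.support with x.2.2.2 = p, χ x * |x.2.2.1 - x.2.2.2| ^ t :=
        sum_congr rfl fun x hx => by rw [(mem_filter.1 hx).2]

lemma FeasibleBiPlan.ECE_generatedPredictor_le (hχ : FeasibleBiPlan S t ε χ) (ht : 1 ≤ t)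
    (hε : 0 ≤ ε) : ECE S t (generatedPredictor S χ) ≤ ε :=
  (hχ.isPredictor_generatedPredictor.ECE_le_iff (by positivity) hε).2
    ((hχ.1.sum_marginal_generatedPredictor_le ht _).trans hχ.2.1)

lemma payoff_generatedPredictor (S : Setup n) (U : Fin n → ℝ → ℝ) (χ : BiTuple n →₀ ℝ) :
    payoff S U (generatedPredictor S χ) = biObj S U χ := by
  simp only [payoff, lam_mul_sum_generatedPredictor_mul]
  rw [sum_comm, biObj_eq_sum_pairMean]
  refine sum_congr rfl fun x _ => ?_
  simp only [pairMean_eq_sum S x fun k => U k x.2.2.2, ← contrib_eq_pairMean, mul_sum, mul_assoc]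

end GeneratedPredictor

section PairingPlan

variable {S : Setup n} {f : Fin n → ℝ →₀ ℝ} {t ε : ℝ}

/-- The plan that recovers `f`: for each prediction `p`, the masses `λ_i f_i(p)` are split into
pairs of events whose barycenter is `q = κ(p)`, and each pair is sent from `κ(p)` to `p`. -/
def pairingPlan (S : Setup n) (f : Fin n → ℝ →₀ ℝ) : BiTuple n →₀ ℝ :=
  ∑ p ∈ suppF f, ∑ i, ∑ j, Finsupp.single (i, j, kappa S f p, p)
    (pairWeight (fun k => S.lam k * f k p) S.theta (kappa S f p) i j)

lemma IsPredictor.sum_pairingPlan_mul_pairMean (hf : IsPredictor f)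
    (a : ℝ → ℝ → Fin n → ℝ) :
    ∑ x ∈ (pairingPlan S f).support, pairingPlan S f x * pairMean S x (a x.2.2.1 x.2.2.2) =
      ∑ p ∈ suppF f, ∑ i, S.lam i * f i p * a (kappa S f p) p i := by
  change Finsupp.linearCombination ℝ (fun x : BiTuple n => pairMean S x (a x.2.2.1 x.2.2.2))
    (pairingPlan S f) = _
  simp only [pairingPlan, map_sum, Finsupp.linearCombination_single, smul_eq_mul]
  exact sum_congr rfl fun p _ =>
    sum_pairWeight_mul_pairMean (hf.sum_lam_mul_theta_sub_kappa p) p _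

lemma IsPredictor.isBiPlan_pairingPlan (hf : IsPredictor f) : IsBiPlan S (pairingPlan S f) := by
  refine ⟨?_, fun x hx => ?_⟩
  · have hnonneg : 0 ≤ pairingPlan S f :=
      sum_nonneg fun p _ => sum_nonneg fun i _ => sum_nonneg fun j _ =>
        Finsupp.single_nonneg.2 (pairWeight_nonneg (hf.lam_mul_nonneg p) i j)
    exact hnonneg
  · simp only [pairingPlan, Finsupp.mem_support_iff, Finsupp.finsetSum_apply] at hx
    obtain ⟨p, hp, hx⟩ := exists_ne_zero_of_sum_ne_zero hx
    obtain ⟨i, -, hx⟩ := exists_ne_zero_of_sum_ne_zero hx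
    obtain ⟨j, -, hx⟩ := exists_ne_zero_of_sum_ne_zero hx
    obtain ⟨rfl, hw⟩ := Finsupp.single_apply_ne_zero.1 hx
    have hstraddle : i ≤ j ∧ S.theta i ≤ kappa S f p ∧ kappa S f p ≤ S.theta j := by
      rcases eq_or_lt_of_pairWeight_ne_zero (hf.lam_mul_nonneg p)
        (hf.sum_lam_mul_theta_sub_kappa p) hw with ⟨rfl, heq⟩ | ⟨hi, hj⟩
      · exact ⟨le_rfl, heq.le, heq.ge⟩
      · exact ⟨(S.theta_mono.reflect_lt (hi.trans_lt hj)).le, hi, hj.le⟩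
    obtain ⟨hij, hi, hj⟩ := hstraddle
    exact ⟨hij, ⟨(S.theta_mem i).1.trans hi, hj.trans (S.theta_mem j).2⟩,
      hf.mem_Icc_of_mem_suppF hp, hi, hj⟩

lemma IsPredictor.cost_pairingPlan (hf : IsPredictor f) (t : ℝ) :
    ∑ x ∈ (pairingPlan S f).support, pairingPlan S f x * |x.2.2.1 - x.2.2.2| ^ t =
      ∑ p ∈ suppF f, marginal S f p * |kappa S f p - p| ^ t := by
  simpa only [marginal, pairMean_const, ← sum_mul] using
    hf.sum_pairingPlan_mul_pairMean (S := S) fun q p _ => |q - p| ^ t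

lemma IsPredictor.sum_pairingPlan_mul_contrib (hf : IsPredictor f) (k : Fin n) :
    ∑ x ∈ (pairingPlan S f).support, pairingPlan S f x * contrib S x k = S.lam k := by
  simp only [contrib_eq_pairMean]
  rw [hf.sum_pairingPlan_mul_pairMean fun _ _ => Pi.single k 1]
  simp only [Pi.single_apply, mul_ite, mul_one, mul_zero, sum_ite_eq', mem_univ, if_true,
    ← mul_sum, hf.sum_suppF_eq_one]

lemma IsPredictor.feasibleBiPlan_pairingPlan (hf : IsPredictor f) (ht : 0 < t) (hε : 0 ≤ ε)
    (hECE : ECE S t f ≤ ε) : FeasibleBiPlan S t ε (pairingPlan S f) :=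
  ⟨hf.isBiPlan_pairingPlan, (hf.cost_pairingPlan t).trans_le ((hf.ECE_le_iff ht hε).1 hECE),
    hf.sum_pairingPlan_mul_contrib⟩

lemma IsPredictor.biObj_pairingPlan (hf : IsPredictor f) (U : Fin n → ℝ → ℝ) :
    biObj S U (pairingPlan S f) = payoff S U f := by
  rw [biObj_eq_sum_pairMean, payoff_eq_sum_suppF]
  exact hf.sum_pairingPlan_mul_pairMean fun _ p k => U k p

end PairingPlan

theorem statement12_general (S : Setup n) {t ε : ℝ} (ht : 1 ≤ t) (hε : 0 ≤ ε)
    (U : Fin n → ℝ → ℝ) :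
    {v | ∃ f : Fin n → ℝ →₀ ℝ, (IsPredictor f ∧ ECE S t f ≤ ε) ∧ v = payoff S U f} =
      {v | ∃ χ : BiTuple n →₀ ℝ, FeasibleBiPlan S t ε χ ∧ v = biObj S U χ} ∧
    ∀ χ : BiTuple n →₀ ℝ, FeasibleBiPlan S t ε χ →
      ∃ f : Fin n → ℝ →₀ ℝ, (∀ i p, f i p = genValBi S χ i p) ∧ IsPredictor f ∧
        ECE S t f ≤ ε ∧ payoff S U f = biObj S U χ := by
  refine ⟨Set.Subset.antisymm ?_ ?_, fun χ hχ => ?_⟩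
  · rintro _ ⟨f, ⟨hf, hECE⟩, rfl⟩
    exact ⟨pairingPlan S f, hf.feasibleBiPlan_pairingPlan (by positivity) hε hECE,
      (hf.biObj_pairingPlan U).symm⟩
  · rintro _ ⟨χ, hχ, rfl⟩
    exact ⟨generatedPredictor S χ,
      ⟨hχ.isPredictor_generatedPredictor, hχ.ECE_generatedPredictor_le ht hε⟩,
      (payoff_generatedPredictor S U χ).symm⟩
  · exact ⟨generatedPredictor S χ, generatedPredictor_apply S χ,
      hχ.isPredictor_generatedPredictor, hχ.ECE_generatedPredictor_le ht hε,
      payoff_generatedPredictor S U χ⟩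

/-- The supremum of the principal's payoff over all finitely supported
`(ε, ℓ_t)`-calibrated predictors equals the optimal value of LP-TwoStep+; moreover
every feasible bi-event post-processing plan generates an `(ε, ℓ_t)`-calibrated
predictor whose payoff equals its objective value in LP-TwoStep+. -/
theorem statement12 {n : ℕ} (S : Setup n) (t ε : ℝ) (ht : 1 ≤ t) (hε : 0 ≤ ε)
    (U : Fin n → ℝ → ℝ) (hU0 : ∀ i, ∀ p ∈ Set.Icc (0 : ℝ) 1, 0 ≤ U i p) :
    sSup {v | ∃ f : Fin n → ℝ →₀ ℝ,
        (IsPredictor f ∧ ECE S t f ≤ ε) ∧ v = payoff S U f} = OPTBi S U t ε ∧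
    ∀ χ : BiTuple n →₀ ℝ, FeasibleBiPlan S t ε χ →
      ∃ f : Fin n → ℝ →₀ ℝ, (∀ i p, f i p = genValBi S χ i p) ∧ IsPredictor f ∧
        ECE S t f ≤ ε ∧ payoff S U f = biObj S U χ := by
  exact (statement12_general S ht hε U).imp_left (congrArg sSup)

end PersuasiveCalibration
end
end

section
/- (Action-recommendation program characterization.) For any ε ≥ 0 and t ≥ 1, the supremum of the sender's payoff over all sender strategies (π, b) on arbitrary finite signal sets satisfying the bounded-rationality constraint equals the supremum of the program P-ActRec: maximize Σ_i Σ_{a∈A} λ_i·π_i(a)·u(a,θ_i) over variables π_i(a) ≥ 0 and b(a) ∈ ℝ, subject to Σ_a π_i(a) = 1 for every i; writing m_a = Σ_i λ_i·π_i(a) and x_a = b(a) + Σ_i λ_i·π_i(a)·θ_i, the constraints Σ_{a: m_a>0} m_a·|b(a)/m_a|^t ≤ ε^t (with b(a) = 0 whenever m_a = 0), 0 ≤ x_a ≤ m_a for every a, and, for all a, a' ∈ A, x_a·v(a,1) + (m_a − x_a)·v(a,0) ≥ x_a·v(a',1) + (m_a − x_a)·v(a',0). -/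
open Finset

noncomputable section

namespace PersuasiveCalibration

variable {n : ℕ}

variable {A σT : Type*}

/-!
Multiplying every condition on a signal `σ` by its mass `m(σ)` turns the requirements on the
belief `p(σ)` into inequalities that are linear in the pair `(m(σ), x(σ))` with
`x(σ) = m(σ) p(σ)`. Linear inequalities survive merging signals, and the cost
`∑ m(σ) |b(σ) / m(σ)| ^ t` can only decrease under merging, by Jensen's inequality. Merging all
signals that induce the same action therefore turns a strategy into an action recommendation with
the same payoff. Conversely, a recommendation is a strategy whose signals are the actions.
-/

section Jensen

/-- Jensen's inequality for the perspective `(m, b) ↦ m * φ (b / m)` of a convex function. -/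
lemma sum_mul_map_inv_smul_sum_le {ι E : Type*} [AddCommGroup E] [Module ℝ E] {φ : E → ℝ}
    (hφ : ConvexOn ℝ Set.univ φ) {s : Finset ι} {m : ι → ℝ} {b : ι → E}
    (hm : ∀ i ∈ s, 0 ≤ m i) (hb : ∀ i ∈ s, m i = 0 → b i = 0) :
    (∑ i ∈ s, m i) * φ ((∑ i ∈ s, m i)⁻¹ • ∑ i ∈ s, b i) ≤
      ∑ i ∈ s, m i * φ ((m i)⁻¹ • b i) := by
  rcases (sum_nonneg hm).eq_or_lt with hzero | hpos
  · have hm0 : ∀ i ∈ s, m i = 0 := (sum_eq_zero_iff_of_nonneg hm).1 hzero.symm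
    rw [← hzero, zero_mul, sum_eq_zero fun i hi => by rw [hm0 i hi, zero_mul]]
  · have hb_eq : ∑ i ∈ s, b i = ∑ i ∈ s, m i • (m i)⁻¹ • b i := by
      refine sum_congr rfl fun i hi => ?_
      by_cases hmi : m i = 0
      · rw [hb i hi hmi, smul_zero, smul_zero]
      · rw [smul_inv_smul₀ hmi]
    have jensen := hφ.map_centerMass_le (p := fun i => (m i)⁻¹ • b i) hm hpos
      fun _ _ => Set.mem_univ _
    rw [centerMass, centerMass, ← hb_eq, smul_eq_mul, le_inv_mul_iff₀ hpos] at jensen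
    exact jensen

lemma convexOn_norm_rpow {E : Type*} [SeminormedAddCommGroup E] [NormedSpace ℝ E] {t : ℝ}
    (ht : 1 ≤ t) : ConvexOn ℝ Set.univ fun x : E => ‖x‖ ^ t := by
  have hIci : norm '' (Set.univ : Set E) ⊆ Set.Ici 0 :=
    Set.image_subset_iff.2 fun x _ => norm_nonneg x
  have hconv : Convex ℝ (norm '' (Set.univ : Set E)) :=
    (isPreconnected_univ.image _ continuous_norm.continuousOn).ordConnected.convex
  exact ((convexOn_rpow ht).subset hIci hconv).comp convexOn_univ_norm
    ((Real.monotoneOn_rpow_Ici_of_exponent_nonneg (zero_le_one.trans ht)).mono hIci)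

end Jensen

section Linearization

variable [Fintype σT] (P : PSetup n A) (t : ℝ) (π : Fin n → σT → ℝ) (b : σT → ℝ)

/-- The unnormalized biased posterior mean `x(σ) = m(σ) p(σ)`; unlike `p`, it is linear in
`(π, b)`. -/
def biasedMoment (σ : σT) : ℝ := b σ + ∑ i, P.lam i * π i σ * P.theta i

/-- The `t`-th power of the left-hand side of the bounded-rationality constraint. -/
def biasCost : ℝ := ∑ σ, mass P π σ * |b σ / mass P π σ| ^ t

/-- The receiver's utility `m * v(a, x / m)` from action `a` at belief mean `x / m`, weighted by
the mass `m` and written without division so as to be linear in `(m, x)`. -/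
def weightedRcvU (a : A) (m x : ℝ) : ℝ := x * P.v1 a + (m - x) * P.v0 a

/-- The constraints of P-ActRec for an arbitrary finite signal set, where the receiver answers the
signal `σ` with the action `f σ`. P-ActRec itself is the case `f = id`. -/
structure LinearFeasible (ε : ℝ) (f : σT → A) : Prop where
  nonneg : ∀ i σ, 0 ≤ π i σ
  sum_eq_one : ∀ i, ∑ σ, π i σ = 1
  bias_eq_zero : ∀ σ, mass P π σ = 0 → b σ = 0
  biasCost_le : biasCost P t π b ≤ ε ^ t
  biasedMoment_nonneg : ∀ σ, 0 ≤ biasedMoment P π b σ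
  biasedMoment_le_mass : ∀ σ, biasedMoment P π b σ ≤ mass P π σ
  weightedRcvU_le : ∀ σ a, weightedRcvU P a (mass P π σ) (biasedMoment P π b σ) ≤
    weightedRcvU P (f σ) (mass P π σ) (biasedMoment P π b σ)

variable {P t π b}

lemma pActRecFeasible_iff_linearFeasible_id [Fintype A] {ε : ℝ} {π : Fin n → A → ℝ} {b : A → ℝ} :
    PActRecFeasible P t ε π b ↔ LinearFeasible P t π b ε id :=
  ⟨fun ⟨h₁, h₂, h₃, h₄, h₅, h₆, h₇⟩ => ⟨h₁, h₂, h₃, h₄, h₅, h₆, h₇⟩,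
    fun ⟨h₁, h₂, h₃, h₄, h₅, h₆, h₇⟩ => ⟨h₁, h₂, h₃, h₄, h₅, h₆, h₇⟩⟩

lemma mass_nonneg {σ : σT} (hπ : ∀ i, 0 ≤ π i σ) : 0 ≤ mass P π σ :=
  sum_nonneg fun i _ => mul_nonneg (P.lam_pos i).le (hπ i)

lemma biasedMoment_eq_mass_mul_belief {σ : σT} (hπ : ∀ i, 0 ≤ π i σ)
    (hb : mass P π σ = 0 → b σ = 0) :
    biasedMoment P π b σ = mass P π σ * belief P π b σ := by
  by_cases hm : mass P π σ = 0
  · have hsummand : ∀ i ∈ univ, P.lam i * π i σ = 0 :=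
      (sum_eq_zero_iff_of_nonneg fun i _ => mul_nonneg (P.lam_pos i).le (hπ i)).1 hm
    rw [biasedMoment, hb hm, hm, zero_mul, zero_add]
    exact sum_eq_zero fun i hi => by rw [hsummand i hi, zero_mul]
  · rw [belief, mul_div_cancel₀ _ hm, biasedMoment]

lemma weightedRcvU_mul_eq_mul_rcvU (a : A) (m p : ℝ) :
    weightedRcvU P a m (m * p) = m * rcvU P a p := by
  rw [weightedRcvU, rcvU]
  ring

lemma brConstraint_iff_biasCost_le {ε : ℝ} (hπ : ∀ i σ, 0 ≤ π i σ) (ht : 0 < t) (hε : 0 ≤ ε) :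
    BRconstraint P t ε π b ↔ biasCost P t π b ≤ ε ^ t := by
  rw [BRconstraint, one_div]
  refine Real.rpow_inv_le_iff_of_pos (sum_nonneg fun σ _ => ?_) hε ht
  exact mul_nonneg (mass_nonneg fun i => hπ i σ) (Real.rpow_nonneg (abs_nonneg _) t)

lemma linearFeasible_iff {ε : ℝ} {f : σT → A} (ht : 0 < t) (hε : 0 ≤ ε) :
    LinearFeasible P t π b ε f ↔ (∀ σ, mass P π σ = 0 → b σ = 0) ∧
      ValidStrategy P π b ∧ BestResponse P π b f ∧ BRconstraint P t ε π b := by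
  constructor
  · rintro ⟨hπ, hsum, hb, hcost, hx₀, hx₁, hresp⟩
    have hx σ := biasedMoment_eq_mass_mul_belief (fun i => hπ i σ) (hb σ)
    simp only [hx, weightedRcvU_mul_eq_mul_rcvU] at hx₀ hx₁ hresp
    exact ⟨hb, ⟨hπ, hsum, fun σ hσ =>
        ⟨nonneg_of_mul_nonneg_right (hx₀ σ) hσ, (mul_le_iff_le_one_right hσ).1 (hx₁ σ)⟩⟩,
      fun σ hσ a => le_of_mul_le_mul_left (hresp σ a) hσ,
      (brConstraint_iff_biasCost_le hπ ht hε).2 hcost⟩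
  · rintro ⟨hb, ⟨hπ, hsum, hbelief⟩, hresp, hcost⟩
    have hx σ := biasedMoment_eq_mass_mul_belief (fun i => hπ i σ) (hb σ)
    have mass_mul_le σ {x y : ℝ} (hxy : 0 < mass P π σ → x ≤ y) :
        mass P π σ * x ≤ mass P π σ * y := by
      rcases (mass_nonneg fun i => hπ i σ).eq_or_lt with hσ | hσ
      · rw [← hσ, zero_mul, zero_mul]
      · exact mul_le_mul_of_nonneg_left (hxy hσ) hσ.le
    refine ⟨hπ, hsum, hb, (brConstraint_iff_biasCost_le hπ ht hε).1 hcost, fun σ => ?_,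
      fun σ => ?_, fun σ a => ?_⟩
    · simpa only [hx, mul_zero] using mass_mul_le σ fun hσ => (hbelief σ hσ).1
    · simpa only [hx, mul_one] using mass_mul_le σ fun hσ => (hbelief σ hσ).2
    · simpa only [hx, weightedRcvU_mul_eq_mul_rcvU] using mass_mul_le σ fun hσ => hresp σ hσ a

-- A null signal has belief `x / 0 = 0` and cost `0` whatever its bias, so the bias may be erased.
lemma linearFeasible_indicator_support_mass {ε : ℝ} {f : σT → A} (ht : 0 < t) (hε : 0 ≤ ε)
    (hvalid : ValidStrategy P π b) (hresp : BestResponse P π b f)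
    (hcost : BRconstraint P t ε π b) :
    LinearFeasible P t π ((Function.support (mass P π)).indicator b) ε f := by
  set b₀ := (Function.support (mass P π)).indicator b
  have hnull σ (hσ : mass P π σ = 0) : b₀ σ = 0 :=
    Set.indicator_of_notMem (Function.notMem_support.2 hσ) b
  have hdiv σ : b₀ σ / mass P π σ = b σ / mass P π σ := by
    by_cases hσ : mass P π σ = 0
    · rw [hσ, div_zero, div_zero]
    · exact congrArg (· / mass P π σ) (Set.indicator_of_mem (Function.mem_support.2 hσ) b)
  have hbelief : belief P π b₀ = belief P π b := by
    funext σ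
    rw [belief, belief, add_div, add_div, hdiv]
  rw [linearFeasible_iff ht hε]
  refine ⟨hnull, ?_, ?_, ?_⟩
  · rwa [ValidStrategy, hbelief]
  · rwa [BestResponse, hbelief]
  · simpa only [BRconstraint, hdiv] using hcost

end Linearization

section Pooling

variable {τT M : Type*} [Fintype σT] [DecidableEq τT]

/-- The pushforward of weights `w` along `g`. It merges all signals with the same image under `g`
when applied to each `π i` and to `b`. -/
def pool [AddCommMonoid M] (g : σT → τT) (w : σT → M) (τ : τT) : M := ∑ σ with g σ = τ, w σ

lemma sum_pool [Fintype τT] [AddCommMonoid M] (g : σT → τT) (w : σT → M) :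
    ∑ τ, pool g w τ = ∑ σ, w σ :=
  sum_fiberwise univ g w

lemma sum_pool_mul [Fintype τT] [NonUnitalNonAssocSemiring M] (g : σT → τT) (w : σT → M)
    (c : τT → M) : ∑ τ, pool g w τ * c τ = ∑ σ, w σ * c (g σ) := by
  rw [← sum_fiberwise univ g]
  refine sum_congr rfl fun τ _ => ?_
  rw [pool, sum_mul]
  exact sum_congr rfl fun σ hσ => by rw [(mem_filter.1 hσ).2]

variable {P : PSetup n A} {t : ℝ} {π : Fin n → σT → ℝ} {b : σT → ℝ}

lemma biasedMoment_pool (g : σT → τT) :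
    biasedMoment P (fun i => pool g (π i)) (pool g b) = pool g (biasedMoment P π b) := by
  funext τ
  simp only [biasedMoment, pool, sum_add_distrib, mul_sum, sum_mul]
  rw [sum_comm]

lemma weightedRcvU_pool (a : A) (g : σT → τT) (m x : σT → ℝ) (τ : τT) :
    weightedRcvU P a (pool g m τ) (pool g x τ) =
      pool g (fun σ => weightedRcvU P a (m σ) (x σ)) τ := by
  simp only [weightedRcvU, pool, ← sum_sub_distrib, sum_mul, ← sum_add_distrib]

variable [Fintype τT]

lemma mass_pool (g : σT → τT) :
    mass P (fun i => pool g (π i)) = pool g (mass P π) := by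
  funext τ
  simp only [mass, pool, mul_sum]
  exact sum_comm

lemma senderPayoff_pool (g : σT → τT) (f : τT → A) :
    senderPayoff P (fun i => pool g (π i)) f = senderPayoff P π (f ∘ g) := by
  simp only [senderPayoff, sum_pool_mul, Function.comp_apply]

lemma biasCost_pool_le (ht : 1 ≤ t) (hπ : ∀ i σ, 0 ≤ π i σ)
    (hb : ∀ σ, mass P π σ = 0 → b σ = 0) (g : σT → τT) :
    biasCost P t (fun i => pool g (π i)) (pool g b) ≤ biasCost P t π b := by
  rw [biasCost, biasCost, ← sum_pool g, mass_pool]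
  refine sum_le_sum fun τ _ => ?_
  have jensen := sum_mul_map_inv_smul_sum_le (convexOn_norm_rpow (E := ℝ) ht)
    (s := {σ | g σ = τ}) (fun σ _ => mass_nonneg (P := P) fun i => hπ i σ) (fun σ _ => hb σ)
  simpa only [pool, smul_eq_mul, inv_mul_eq_div, Real.norm_eq_abs] using jensen

lemma LinearFeasible.pool {ε : ℝ} {g : σT → τT} {f : τT → A} (ht : 1 ≤ t)
    (h : LinearFeasible P t π b ε (f ∘ g)) :
    LinearFeasible P t (fun i => pool g (π i)) (pool g b) ε f where
  nonneg i _ := sum_nonneg fun σ _ => h.nonneg i σ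
  sum_eq_one i := by rw [sum_pool, h.sum_eq_one]
  bias_eq_zero τ hτ := by
    rw [mass_pool] at hτ
    have hmass := (sum_eq_zero_iff_of_nonneg fun σ _ => mass_nonneg fun i => h.nonneg i σ).1 hτ
    exact sum_eq_zero fun σ hσ => h.bias_eq_zero σ (hmass σ hσ)
  biasCost_le := (biasCost_pool_le ht h.nonneg h.bias_eq_zero g).trans h.biasCost_le
  biasedMoment_nonneg τ := by
    rw [biasedMoment_pool]
    exact sum_nonneg fun σ _ => h.biasedMoment_nonneg σ
  biasedMoment_le_mass τ := by
    rw [biasedMoment_pool, mass_pool]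
    exact sum_le_sum fun σ _ => h.biasedMoment_le_mass σ
  weightedRcvU_le τ a := by
    rw [biasedMoment_pool, mass_pool, weightedRcvU_pool, weightedRcvU_pool]
    refine sum_le_sum fun σ hσ => ?_
    rw [← (mem_filter.1 hσ).2]
    exact h.weightedRcvU_le σ a

end Pooling

section Revelation

variable [Fintype A] {P : PSetup n A} {t ε : ℝ}

lemma exists_pActRecFeasible_senderPayoff_eq [Fintype σT] {π : Fin n → σT → ℝ} {b : σT → ℝ}
    {astar : σT → A} (ht : 1 ≤ t) (hε : 0 ≤ ε) (hvalid : ValidStrategy P π b)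
    (hresp : BestResponse P π b astar) (hcost : BRconstraint P t ε π b) :
    ∃ (π' : Fin n → A → ℝ) (b' : A → ℝ), PActRecFeasible P t ε π' b' ∧
      senderPayoff P π astar = senderPayoff P π' id := by
  classical
  have hlin := linearFeasible_indicator_support_mass (zero_lt_one.trans_le ht) hε
    hvalid hresp hcost
  exact ⟨_, _, pActRecFeasible_iff_linearFeasible_id.2 (hlin.pool (g := astar) (f := id) ht),
    (senderPayoff_pool astar id).symm⟩

-- Pooling along a bijection only renames the signals.
lemma exists_strategy_senderPayoff_eq [Fintype σT] (e : A ≃ σT) {π : Fin n → A → ℝ}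
    {b : A → ℝ} (ht : 1 ≤ t) (hε : 0 ≤ ε) (hfeas : PActRecFeasible P t ε π b) :
    ∃ (π' : Fin n → σT → ℝ) (b' : σT → ℝ) (astar : σT → A), ValidStrategy P π' b' ∧
      BestResponse P π' b' astar ∧ BRconstraint P t ε π' b' ∧
        senderPayoff P π id = senderPayoff P π' astar := by
  classical
  rw [pActRecFeasible_iff_linearFeasible_id, ← e.symm_comp_self] at hfeas
  obtain ⟨-, hvalid, hresp, hcost⟩ :=
    (linearFeasible_iff (zero_lt_one.trans_le ht) hε).1 (hfeas.pool ht)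
  refine ⟨_, _, e.symm, hvalid, hresp, hcost, ?_⟩
  rw [senderPayoff_pool, e.symm_comp_self]

end Revelation

/-- The supremum of the sender's payoff over all valid strategies
with best-response receiver selections on arbitrary finite signal sets, subject to the
bounded-rationality constraint, equals the optimal value of the action-recommendation
program P-ActRec. -/
theorem statement17 {n : ℕ} {A : Type*} [Fintype A]
    (P : PSetup n A) (t ε : ℝ) (ht : 1 ≤ t) (hε : 0 ≤ ε) :
    sSup {v | ∃ (k : ℕ) (π : Fin n → Fin k → ℝ) (b : Fin k → ℝ) (astar : Fin k → A),
        ValidStrategy P π b ∧ BestResponse P π b astar ∧ BRconstraint P t ε π b ∧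
          v = senderPayoff P π astar}
      = sSup {v | ∃ (π : Fin n → A → ℝ) (b : A → ℝ), PActRecFeasible P t ε π b ∧
          v = ∑ i, P.lam i * ∑ a, π i a * P.u a i} := by
  congr 1
  ext v
  constructor
  · rintro ⟨k, π, b, astar, hvalid, hresp, hcost, rfl⟩
    exact exists_pActRecFeasible_senderPayoff_eq ht hε hvalid hresp hcost
  · rintro ⟨π, b, hfeas, rfl⟩
    exact ⟨Fintype.card A, exists_strategy_senderPayoff_eq (Fintype.equivFin A) ht hε hfeas⟩

end PersuasiveCalibration
end
end
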